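/- Let K be an algebraically closed field of characteristic different from 2, let g ≥ 2, and let {I₁,…,I_m} be a finite set of homogeneous generators, of degrees d₁,…,d_m, of the algebra 𝓘_{2g+2} of SL₂(K)-invariants of binary forms of degree 2g+2. Let f and f' be hyperelliptic polynomials of degree 2g+2 over K. Then the hyperelliptic curves C : y² = f(x) and C' : y² = f'(x) of genus g are K-isomorphic — i.e. there exist M ∈ GL₂(K) and e ∈ K* with e²·f(X,Z) = f'(M·(X,Z)) — if and only if there exists λ ∈ K* such that I_i(f') = λ^{d_i}·I_i(f) for all i = 1,…,m. -/

import Mathlib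

open MvPolynomial

/-- The action of a matrix `M` on binary forms: `(M.f)(x,z) = f(M⁻¹·(x,z))`. -/
noncomputable def matAct {K : Type*} [Field K] (M : Matrix (Fin 2) (Fin 2) K)
    (f : MvPolynomial (Fin 2) K) : MvPolynomial (Fin 2) K :=
  bind₁ (fun j : Fin 2 => C (M⁻¹ j 0) * X 0 + C (M⁻¹ j 1) * X 1) f

/-- The coefficient vector `(a₀,…,a_n)` of a binary `n`-form, `a_i` being the coefficient of
`xⁱ·z^{n−i}`. -/
noncomputable def coeffVec {K : Type*} [Field K] (n : ℕ) (f : MvPolynomial (Fin 2) K) :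
    Fin (n + 1) → K :=
  fun i => coeff (Finsupp.single 0 (i : ℕ) + Finsupp.single 1 (n - (i : ℕ))) f

/-- A polynomial `P` in the `n+1` coefficients of a binary `n`-form is an `SL₂(K)`-invariant
if its value is unchanged under the substitution `f ↦ M.f` for every `M ∈ SL₂(K)`. -/
def IsInvariantPoly {K : Type*} [Field K] (n : ℕ) (P : MvPolynomial (Fin (n + 1)) K) : Prop :=
  ∀ M : Matrix (Fin 2) (Fin 2) K, M.det = 1 →
    ∀ f : MvPolynomial (Fin 2) K, f.IsHomogeneous n →
      eval (coeffVec n (matAct M f)) P = eval (coeffVec n f) P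

/-!
If `e²·f(X,Z) = f'(M·(X,Z))`, rescaling `M` to determinant one multiplies the form by a scalar,
which invariants see only through their degrees. For the converse, absorb `λ` into `f`, so that all
invariants agree on `f` and `f'`, and write both as products of linear forms; three of the zeros
being fixed, it suffices to match the cross-ratios of the other zeros up to a permutation. If no
permutation did, some product over all permutations of a weighted sum of differences of
cross-ratios would vanish on `f` and not on `f'`. Cleared of denominators by the discriminant, that
product is a polynomial in the coefficients of the factors, symmetric in them, homogeneous of the
same degree in each, and unchanged under `SL₂(K)`. By the symmetric function theorem it is a
polynomial in the coefficients of the form divided by a power of the coefficient `a₀`, and the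
division is exact because every coefficient vector with `a₀ = 0` also comes from linear forms. Thus
it is an invariant separating `f` from `f'`, a contradiction.
-/

namespace BinaryForm

open scoped Matrix

section LinearForm

variable {R : Type*} [CommRing R]

/-- The linear form `v₀ X + v₁ Z` in the two variables of a binary form. -/
noncomputable def linearForm (v : Fin 2 → R) : MvPolynomial (Fin 2) R :=
  C (v 0) * X 0 + C (v 1) * X 1

/-- The affine polynomial `v₀ x + v₁`, the dehomogenization of `linearForm v` at `Z = 1`. -/
noncomputable def affineForm (v : Fin 2 → R) : Polynomial R :=
  Polynomial.C (v 0) * Polynomial.X + Polynomial.C (v 1)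

/-- The coefficient vector of the product of the linear forms `l i`, in the indexing of
`coeffVec`. It is read off the dehomogenized product so that it makes sense over every
commutative ring. -/
noncomputable def prodCoeff {n : ℕ} (l : Fin n → Fin 2 → R) : Fin (n + 1) → R :=
  fun j => (∏ i, affineForm (l i)).coeff j

/-- The substitution `f(X, Z) ↦ f(M·(X, Z))`. -/
noncomputable def pullback (M : Matrix (Fin 2) (Fin 2) R) :
    MvPolynomial (Fin 2) R →ₐ[R] MvPolynomial (Fin 2) R :=
  bind₁ fun j => linearForm (M j)

lemma linearForm_smul (c : R) (v : Fin 2 → R) : linearForm (c • v) = C c * linearForm v := by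
  simp only [linearForm, Pi.smul_apply, smul_eq_mul, C_mul]
  ring

lemma prod_linearForm_smul {ι : Type*} [Fintype ι] (t : ι → R) (l : ι → Fin 2 → R) :
    ∏ i, linearForm (t i • l i) = C (∏ i, t i) * ∏ i, linearForm (l i) := by
  simp_rw [linearForm_smul, Finset.prod_mul_distrib, map_prod]

lemma not_isUnit_linearForm [Nontrivial R] (v : Fin 2 → R) : ¬IsUnit (linearForm v) := by
  intro hv
  have hroot : eval ![-v 1, v 0] (linearForm v) = 0 := by
    simp only [linearForm, map_add, map_mul, eval_C, eval_X, Matrix.cons_val_zero,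
      Matrix.cons_val_one]
    ring
  exact not_isUnit_zero (hroot ▸ hv.map (eval ![-v 1, v 0]))

lemma pullback_linearForm (M : Matrix (Fin 2) (Fin 2) R) (v : Fin 2 → R) :
    pullback M (linearForm v) = linearForm (v ᵥ* M) := by
  simp only [pullback, linearForm, map_add, map_mul, bind₁_C_right, bind₁_X_right,
    Matrix.vecMul_eq_sum, Fin.sum_univ_two, Pi.add_apply, Pi.smul_apply, smul_eq_mul]
  ring

lemma pullback_prod_linearForm {ι : Type*} [Fintype ι] (M : Matrix (Fin 2) (Fin 2) R)
    (l : ι → Fin 2 → R) :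
    pullback M (∏ i, linearForm (l i)) = ∏ i, linearForm (l i ᵥ* M) := by
  simp_rw [map_prod, pullback_linearForm]

lemma homogenize_affineForm (v : Fin 2 → R) : (affineForm v).homogenize 1 = linearForm v := by
  simp [affineForm, linearForm]

lemma homogenize_prod_affineForm {n : ℕ} (l : Fin n → Fin 2 → R) :
    (∏ i, affineForm (l i)).homogenize n = ∏ i, linearForm (l i) := by
  simpa [homogenize_affineForm] using Polynomial.homogenize_finsetProd (s := Finset.univ)
    (p := fun i => affineForm (l i)) (n := fun _ => 1) fun _ _ => Polynomial.natDegree_linear_le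

lemma isHomogeneous_prod_linearForm {n : ℕ} (l : Fin n → Fin 2 → R) :
    (∏ i, linearForm (l i)).IsHomogeneous n :=
  homogenize_prod_affineForm l ▸ Polynomial.isHomogeneous_homogenize _

lemma map_prodCoeff {S : Type*} [CommRing S] (φ : R →+* S) {n : ℕ} (l : Fin n → Fin 2 → R)
    (j : Fin (n + 1)) : φ (prodCoeff l j) = prodCoeff (fun i c => φ (l i c)) j := by
  simp only [prodCoeff, ← Polynomial.coeff_map, Polynomial.map_prod, affineForm,
    Polynomial.map_add, Polynomial.map_mul, Polynomial.map_C, Polynomial.map_X]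

lemma prodCoeff_zero {n : ℕ} (l : Fin n → Fin 2 → R) : prodCoeff l 0 = ∏ i, l i 1 := by
  simp [prodCoeff, affineForm, Polynomial.coeff_zero_prod]

end LinearForm

section Homogeneous

lemma aeval_smul_of_isHomogeneous {R A σ : Type*} [CommSemiring R] [CommSemiring A] [Algebra R A]
    {P : MvPolynomial σ R} {d : ℕ} (hP : P.IsHomogeneous d) (c : A) (x : σ → A) :
    aeval (c • x) P = c ^ d * aeval x P := by
  simp only [aeval_def, eval₂_eq, Finset.mul_sum]
  refine Finset.sum_congr rfl fun s hs => ?_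
  have hdeg : ∑ i ∈ s.support, s i = d := (hP.degree_eq_sum_deg_support hs).symm
  simp only [Pi.smul_apply, smul_eq_mul, mul_pow, Finset.prod_mul_distrib,
    Finset.prod_pow_eq_pow_sum, hdeg]
  ring

lemma eval_smul_of_isHomogeneous {R σ : Type*} [CommSemiring R] {P : MvPolynomial σ R} {d : ℕ}
    (hP : P.IsHomogeneous d) (c : R) (x : σ → R) : eval (c • x) P = c ^ d * eval x P := by
  simpa only [aeval_eq_eval] using aeval_smul_of_isHomogeneous hP c x

lemma pullback_smul {R : Type*} [CommRing R] {n : ℕ} {f : MvPolynomial (Fin 2) R}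
    (hf : f.IsHomogeneous n) (c : R) (M : Matrix (Fin 2) (Fin 2) R) :
    pullback (c • M) f = C (c ^ n) * pullback M f := by
  rw [C_pow, pullback, bind₁, pullback, bind₁, ← aeval_smul_of_isHomogeneous hf]
  congr 2
  funext j
  exact linearForm_smul c (M j)

variable {K : Type*} [Field K] {n : ℕ}

lemma matAct_eq_pullback_inv (M : Matrix (Fin 2) (Fin 2) K) (f : MvPolynomial (Fin 2) K) :
    matAct M f = pullback M⁻¹ f :=
  rfl

lemma coeffVec_C_mul (c : K) (f : MvPolynomial (Fin 2) K) :
    coeffVec n (C c * f) = c • coeffVec n f := by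
  ext j
  simp only [coeffVec, coeff_C_mul, Pi.smul_apply, smul_eq_mul]

lemma coeffVec_prod_linearForm (l : Fin n → Fin 2 → K) :
    coeffVec n (∏ i, linearForm (l i)) = prodCoeff l := by
  ext j
  have hj : (j : ℕ) + (n - j) = n := Nat.add_sub_of_le j.is_le
  simp [coeffVec, prodCoeff, ← homogenize_prod_affineForm, Polynomial.coeff_homogenize, hj]

lemma eq_of_coeffVec_eq {f f' : MvPolynomial (Fin 2) K} (hf : f.IsHomogeneous n)
    (hf' : f'.IsHomogeneous n) (h : coeffVec n f = coeffVec n f') : f = f' := by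
  ext s
  by_cases hs : s.degree = n
  · rw [Finsupp.degree_eq_sum, Fin.sum_univ_two] at hs
    have hs' : s = Finsupp.single 0 (s 0) + Finsupp.single 1 (n - s 0) := by
      ext k
      fin_cases k <;> simp [← hs]
    rw [hs']
    exact congrFun h ⟨s 0, by lia⟩
  · rw [hf.coeff_eq_zero hs, hf'.coeff_eq_zero hs]

end Homogeneous

section Factorization

variable {K : Type*} [Field K] [IsAlgClosed K] {n : ℕ}

lemma exists_eq_prod_affineForm (n : ℕ) (p : Polynomial K) (hp : p.natDegree ≤ n + 1) :
    ∃ l : Fin (n + 1) → Fin 2 → K, p = ∏ i, affineForm (l i) := by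
  induction n generalizing p with
  | zero =>
    refine ⟨fun _ => ![p.coeff 1, p.coeff 0], ?_⟩
    simpa [affineForm] using Polynomial.eq_X_add_C_of_natDegree_le_one hp
  | succ n ih =>
    rcases hp.lt_or_eq with hlt | heq
    · obtain ⟨l, hl⟩ := ih p (Nat.le_of_lt_succ hlt)
      refine ⟨Fin.cons ![0, 1] l, ?_⟩
      simpa [Fin.prod_univ_succ, affineForm] using hl
    · have hdeg : p.degree ≠ 0 := fun h0 => by
        simp [Polynomial.natDegree_eq_of_degree_eq_some h0] at heq
      obtain ⟨r, hr⟩ := IsAlgClosed.exists_root p hdeg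
      obtain ⟨q, rfl⟩ := Polynomial.dvd_iff_isRoot.mpr hr
      have hq : q ≠ 0 := by
        rintro rfl
        simp at heq
      rw [Polynomial.natDegree_mul (Polynomial.X_sub_C_ne_zero r) hq,
        Polynomial.natDegree_X_sub_C] at heq
      obtain ⟨l, rfl⟩ := ih q (by lia)
      refine ⟨Fin.cons ![1, -r] l, ?_⟩
      simp [Fin.prod_univ_succ, affineForm, sub_eq_add_neg]

lemma exists_prodCoeff_eq (hn : n ≠ 0) (c : Fin (n + 1) → K) :
    ∃ l : Fin n → Fin 2 → K, prodCoeff l = c := by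
  classical
  obtain ⟨n, rfl⟩ := Nat.exists_eq_succ_of_ne_zero hn
  obtain ⟨l, hl⟩ := exists_eq_prod_affineForm n (Polynomial.ofFn (n + 2) c)
    (Nat.le_of_lt_succ (Polynomial.ofFn_natDegree_lt (by lia) c))
  refine ⟨l, ?_⟩
  ext j
  rw [prodCoeff, ← hl, Polynomial.ofFn_coeff_eq_val_of_lt c j.isLt]

lemma exists_eq_prod_linearForm (hn : n ≠ 0) {f : MvPolynomial (Fin 2) K}
    (hf : f.IsHomogeneous n) : ∃ l : Fin n → Fin 2 → K, f = ∏ i, linearForm (l i) := by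
  obtain ⟨l, hl⟩ := exists_prodCoeff_eq hn (coeffVec n f)
  refine ⟨l, eq_of_coeffVec_eq hf (isHomogeneous_prod_linearForm l) ?_⟩
  rw [coeffVec_prod_linearForm, hl]

lemma isInvariantPoly_of_forall_prodCoeff (hn : n ≠ 0) {P : MvPolynomial (Fin (n + 1)) K}
    (h : ∀ M : Matrix (Fin 2) (Fin 2) K, M.det = 1 → ∀ l : Fin n → Fin 2 → K,
      eval (prodCoeff fun i => l i ᵥ* M) P = eval (prodCoeff l) P) :
    IsInvariantPoly n P := by
  intro M hM f hf
  obtain ⟨l, rfl⟩ := exists_eq_prod_linearForm hn hf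
  rw [matAct_eq_pullback_inv, pullback_prod_linearForm, coeffVec_prod_linearForm,
    coeffVec_prod_linearForm, h]
  rw [Matrix.det_nonsing_inv, hM, Ring.inverse_one]

end Factorization

section Descent

/-- The coefficient vectors of `ι`-many linear forms with independent indeterminate
coefficients. -/
noncomputable def genericVec (R ι : Type*) [CommRing R] : ι → Fin 2 → MvPolynomial (ι × Fin 2) R :=
  fun i c => X (i, c)

/-- Rewrites a polynomial in the coefficients of a product of `n` linear forms as a polynomial in
the coefficients of the factors. -/
noncomputable def factorHom (R : Type*) [CommRing R] (n : ℕ) :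
    MvPolynomial (Fin (n + 1)) R →ₐ[R] MvPolynomial (Fin n × Fin 2) R :=
  aeval (prodCoeff (genericVec R (Fin n)))

lemma eval_aeval {R σ τ : Type*} [CommSemiring R] (x : τ → R) (g : σ → MvPolynomial τ R)
    (P : MvPolynomial σ R) : eval x (aeval g P) = eval (fun i => eval x (g i)) P :=
  aeval_bind₁ x g P

lemma eval_prodCoeff_genericVec {R : Type*} [CommRing R] {n : ℕ} (l : Fin n → Fin 2 → R)
    (j : Fin (n + 1)) :
    eval (Function.uncurry l) (prodCoeff (genericVec R (Fin n)) j) = prodCoeff l j := by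
  simp only [map_prodCoeff, genericVec, eval_X, Function.uncurry_apply_pair]

lemma eval_factorHom {R : Type*} [CommRing R] {n : ℕ} (l : Fin n → Fin 2 → R)
    (P : MvPolynomial (Fin (n + 1)) R) :
    eval (Function.uncurry l) (factorHom R n P) = eval (prodCoeff l) P := by
  simp only [factorHom, eval_aeval, eval_prodCoeff_genericVec]

lemma X_zero_dvd_of_forall_eval_cons_zero {R : Type*} [CommRing R] [IsDomain R] [Infinite R] {n : ℕ}
    {P : MvPolynomial (Fin (n + 1)) R}
    (h : ∀ s : Fin n → R, eval (Fin.cons 0 s : Fin (n + 1) → R) P = 0) : X 0 ∣ P := by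
  rw [← map_dvd_iff (finSuccEquiv R n), finSuccEquiv_X_zero, Polynomial.X_dvd_iff]
  refine MvPolynomial.funext fun s => ?_
  rw [map_zero, ← h s, eval_eq_eval_mv_eval', ← Polynomial.coeff_zero_eq_eval_zero,
    Polynomial.coeff_map]

/-- Sets the second coefficient of every linear form equal to `1`, leaving the first ones as
indeterminates. -/
noncomputable def dehomogenize {ι R : Type*} [CommRing R] :
    MvPolynomial (ι × Fin 2) R →ₐ[R] MvPolynomial ι R :=
  aeval (Function.uncurry fun i => ![X i, 1])

lemma eval_dehomogenize {ι R : Type*} [CommRing R] (x : ι → R) (F : MvPolynomial (ι × Fin 2) R) :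
    eval x (dehomogenize F) = eval (Function.uncurry fun i => ![x i, 1]) F := by
  rw [dehomogenize, eval_aeval]
  congr 2
  ext ⟨i, c⟩
  fin_cases c <;> simp

lemma isSymmetric_dehomogenize {ι R : Type*} [CommRing R] [IsDomain R] [Infinite R]
    {F : MvPolynomial (ι × Fin 2) R}
    (hsymm : ∀ (π : Equiv.Perm ι) (l : ι → Fin 2 → R),
      eval (Function.uncurry (l ∘ π)) F = eval (Function.uncurry l) F) :
    (dehomogenize F).IsSymmetric := by
  intro π
  refine MvPolynomial.funext fun x => ?_
  rw [eval_rename, eval_dehomogenize, eval_dehomogenize]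
  exact hsymm π fun i => ![x i, 1]

variable {K : Type*} [Field K] {n : ℕ}

lemma exists_eval_eq_pow_mul_eval_div (p : MvPolynomial (Fin n) K) :
    ∃ (N : ℕ) (P : MvPolynomial (Fin (n + 1)) K), ∀ c : Fin (n + 1) → K, c 0 ≠ 0 →
      eval c P = c 0 ^ N * eval (fun i => c i.succ / c 0) p := by
  induction p using MvPolynomial.induction_on with
  | C a => exact ⟨0, C a, by simp⟩
  | add p q hp hq =>
    obtain ⟨N, P, hP⟩ := hp
    obtain ⟨N', Q, hQ⟩ := hq
    refine ⟨N + N', X 0 ^ N' * P + X 0 ^ N * Q, fun c hc => ?_⟩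
    simp only [map_add, map_mul, map_pow, eval_X, hP c hc, hQ c hc]
    ring
  | mul_X p i hp =>
    obtain ⟨N, P, hP⟩ := hp
    refine ⟨N + 1, P * X i.succ, fun c hc => ?_⟩
    simp only [map_mul, eval_X, hP c hc]
    field_simp
    ring

lemma prodCoeff_eq_prod_mul_esymm (l : Fin n → Fin 2 → K) (h : ∀ i, l i 1 ≠ 0)
    (j : Fin (n + 1)) :
    prodCoeff l j = (∏ i, l i 1) * eval (fun i => l i 0 / l i 1) (esymm (Fin n) K j) := by
  have hprod : ∏ i, affineForm (l i) = Polynomial.C (∏ i, l i 1) *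
      ∏ i, (1 + Polynomial.C (l i 0 / l i 1) * Polynomial.X) := by
    rw [map_prod, ← Finset.prod_mul_distrib]
    refine Finset.prod_congr rfl fun i _ => ?_
    rw [affineForm, mul_add, mul_one, ← mul_assoc, ← Polynomial.C_mul, mul_div_cancel₀ _ (h i),
      add_comm]
  rw [prodCoeff, hprod, Polynomial.coeff_C_mul, Finset.prod_one_add]
  simp only [Finset.prod_mul_distrib, Finset.prod_const, ← map_prod, Polynomial.finsetSum_coeff,
    Polynomial.coeff_C_mul_X_pow]
  rw [esymm, ← Finset.sum_filter, Finset.powersetCard_eq_filter]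
  simp [eq_comm]

lemma exists_eval_dehomogenize_eq [Infinite K] {F : MvPolynomial (Fin n × Fin 2) K}
    (hsymm : ∀ (π : Equiv.Perm (Fin n)) (l : Fin n → Fin 2 → K),
      eval (Function.uncurry (l ∘ π)) F = eval (Function.uncurry l) F) :
    ∃ p : MvPolynomial (Fin n) K, ∀ l : Fin n → Fin 2 → K, (∀ i, l i 1 ≠ 0) →
      eval (fun i => l i 0 / l i 1) (dehomogenize F) =
        eval (fun i => prodCoeff l i.succ / prodCoeff l 0) p := by
  obtain ⟨p, hp⟩ := esymmAlgHom_surjective (σ := Fin n) K (n := n) (by simp)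
    ⟨dehomogenize F, isSymmetric_dehomogenize hsymm⟩
  have hp' : aeval (fun i : Fin n => esymm (Fin n) K (i + 1)) p = dehomogenize F := by
    rw [← esymmAlgHom_apply, hp]
  refine ⟨p, fun l hl => ?_⟩
  have hlead : ∏ i, l i 1 ≠ 0 := Finset.prod_ne_zero_iff.mpr fun i _ => hl i
  rw [← hp', eval_aeval]
  congr 2
  ext i
  rw [prodCoeff_zero, prodCoeff_eq_prod_mul_esymm l hl, mul_div_cancel_left₀ _ hlead,
    Fin.val_succ]

variable [IsAlgClosed K]

lemma mem_range_factorHom_of_mul_mem (hn : n ≠ 0) {F : MvPolynomial (Fin n × Fin 2) K}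
    (h : prodCoeff (genericVec K (Fin n)) 0 * F ∈ (factorHom K n).range) :
    F ∈ (factorHom K n).range := by
  have : Infinite K := IsAlgClosed.instInfinite
  obtain ⟨P, hP⟩ := h
  have hdvd : X 0 ∣ P := by
    refine X_zero_dvd_of_forall_eval_cons_zero fun s => ?_
    obtain ⟨l, hl⟩ := exists_prodCoeff_eq hn (Fin.cons 0 s)
    have hP' : factorHom K n P = prodCoeff (genericVec K (Fin n)) 0 * F := hP
    rw [← hl, ← eval_factorHom, hP', map_mul, eval_prodCoeff_genericVec, hl, Fin.cons_zero,
      zero_mul]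
  obtain ⟨Q, rfl⟩ := hdvd
  have hne : prodCoeff (genericVec K (Fin n)) 0 ≠ 0 := by
    rw [prodCoeff_zero]
    exact Finset.prod_ne_zero_iff.mpr fun i _ => X_ne_zero _
  refine ⟨Q, mul_left_cancel₀ hne ?_⟩
  rw [← hP]
  simp [factorHom]

lemma mem_range_factorHom_of_pow_mul_mem (hn : n ≠ 0) {F : MvPolynomial (Fin n × Fin 2) K}
    (N : ℕ) (h : prodCoeff (genericVec K (Fin n)) 0 ^ N * F ∈ (factorHom K n).range) :
    F ∈ (factorHom K n).range := by
  induction N with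
  | zero => simpa using h
  | succ N ih =>
    rw [pow_succ', mul_assoc] at h
    exact ih (mem_range_factorHom_of_mul_mem hn h)

lemma mem_range_factorHom (hn : n ≠ 0) {F : MvPolynomial (Fin n × Fin 2) K} {k : ℕ}
    (hsymm : ∀ (π : Equiv.Perm (Fin n)) (l : Fin n → Fin 2 → K),
      eval (Function.uncurry (l ∘ π)) F = eval (Function.uncurry l) F)
    (hscale : ∀ (t : Fin n → K) (l : Fin n → Fin 2 → K),
      eval (Function.uncurry fun i => t i • l i) F = (∏ i, t i) ^ k * eval (Function.uncurry l) F) :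
    F ∈ (factorHom K n).range := by
  have : Infinite K := IsAlgClosed.instInfinite
  obtain ⟨p, hp⟩ := exists_eval_dehomogenize_eq hsymm
  obtain ⟨N, P, hP⟩ := exists_eval_eq_pow_mul_eval_div p
  refine mem_range_factorHom_of_pow_mul_mem hn N ⟨X 0 ^ k * P, ?_⟩
  refine MvPolynomial.funext_set (fun _ => {0}ᶜ)
    (fun _ => (Set.finite_singleton 0).infinite_compl) fun y hy => ?_
  obtain ⟨l, rfl⟩ : ∃ l, Function.uncurry l = y := ⟨_, Function.uncurry_curry y⟩
  have hl (i : Fin n) : l i 1 ≠ 0 := hy (i, 1) (Set.mem_univ _)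
  have hlead : prodCoeff l 0 ≠ 0 :=
    prodCoeff_zero l ▸ Finset.prod_ne_zero_iff.mpr fun i _ => hl i
  have hF : eval (Function.uncurry l) F =
      prodCoeff l 0 ^ k * eval (fun i => l i 0 / l i 1) (dehomogenize F) := by
    rw [eval_dehomogenize, prodCoeff_zero, ← hscale]
    congr 2
    ext ⟨i, c⟩
    fin_cases c <;> simp [mul_div_cancel₀, hl]
  calc eval (Function.uncurry l) (factorHom K n (X 0 ^ k * P))
      = prodCoeff l 0 ^ k * eval (prodCoeff l) P := by
        rw [eval_factorHom, map_mul, map_pow, eval_X]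
    _ = prodCoeff l 0 ^ N * eval (Function.uncurry l) F := by
        rw [hP _ hlead, hF, hp l hl]
        ring
    _ = eval (Function.uncurry l) (prodCoeff (genericVec K (Fin n)) 0 ^ N * F) := by
        rw [map_mul, map_pow, eval_prodCoeff_genericVec]

end Descent

section Bracket

variable {R : Type*} [CommRing R]

/-- The bracket `[v w]`, the determinant of the matrix with rows `v` and `w`. For vectors over a
field it vanishes exactly when the linear forms with coefficients `v` and `w` are proportional. -/
def bracket (v w : Fin 2 → R) : R :=
  v 0 * w 1 - v 1 * w 0

lemma bracket_self (v : Fin 2 → R) : bracket v v = 0 := by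
  rw [bracket]
  ring

lemma bracket_smul_smul (s t : R) (v w : Fin 2 → R) :
    bracket (s • v) (t • w) = s * t * bracket v w := by
  simp only [bracket, Pi.smul_apply, smul_eq_mul]
  ring

lemma bracket_vecMul (M : Matrix (Fin 2) (Fin 2) R) (v w : Fin 2 → R) :
    bracket (v ᵥ* M) (w ᵥ* M) = M.det * bracket v w := by
  simp only [bracket, Matrix.vecMul_eq_sum, Fin.sum_univ_two, Pi.add_apply, Pi.smul_apply,
    smul_eq_mul, Matrix.det_fin_two]
  ring

lemma map_bracket {S : Type*} [CommRing S] (φ : R →+* S) (v w : Fin 2 → R) :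
    φ (bracket v w) = bracket (fun c => φ (v c)) fun c => φ (w c) := by
  simp only [bracket, map_sub, map_mul]

lemma ne_zero_of_bracket_ne_zero {v w : Fin 2 → R} (h : bracket v w ≠ 0) : v ≠ 0 := by
  rintro rfl
  simp [bracket] at h

lemma exists_eq_smul_of_bracket_eq_zero {K : Type*} [Field K] {v w : Fin 2 → K} (hv : v ≠ 0)
    (hw : w ≠ 0) (h : bracket v w = 0) : ∃ t : K, t ≠ 0 ∧ v = t • w := by
  obtain ⟨t, rfl⟩ : ∃ t : K, v = t • w := by
    rw [bracket] at h
    by_cases h0 : w 0 = 0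
    · have h1 : w 1 ≠ 0 := fun h1 => hw (by ext i; fin_cases i <;> assumption)
      have hv0 : v 0 = 0 := by simpa [h0, h1] using h
      refine ⟨v 1 / w 1, ?_⟩
      ext i
      fin_cases i <;> simp [h0, h1, hv0]
    · refine ⟨v 0 / w 0, ?_⟩
      ext i
      fin_cases i
      · simp [h0]
      · simp only [Pi.smul_apply, smul_eq_mul, Fin.mk_one]
        field_simp
        linear_combination -h
  exact ⟨t, fun ht => hv (by rw [ht, zero_smul]), rfl⟩

lemma bracket_ne_zero_of_squarefree {K : Type*} [Field K] {ι : Type*} [Fintype ι]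
    {l : ι → Fin 2 → K} (hl : Squarefree (∏ i, linearForm (l i))) :
    Pairwise fun i j => bracket (l i) (l j) ≠ 0 := by
  classical
  intro i j hij hbr
  have hl0 (k : ι) : l k ≠ 0 := fun hk => hl.ne_zero
    (Finset.prod_eq_zero (Finset.mem_univ k) (by simp [linearForm, hk]))
  obtain ⟨t, -, ht⟩ := exists_eq_smul_of_bracket_eq_zero (hl0 i) (hl0 j) hbr
  have hsq : linearForm (l j) * linearForm (l j) ∣ ∏ k, linearForm (l k) :=
    calc linearForm (l j) * linearForm (l j)
        ∣ linearForm (l i) * linearForm (l j) := by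
          rw [ht, linearForm_smul, mul_assoc]
          exact Dvd.intro_left _ rfl
      _ = ∏ k ∈ {i, j}, linearForm (l k) := by
          rw [Finset.prod_pair hij]
      _ ∣ ∏ k, linearForm (l k) := Finset.prod_dvd_prod_of_subset _ _ _ (Finset.subset_univ _)
  exact not_isUnit_linearForm (l j) (hl _ hsq)

end Bracket

section Discriminant

variable {R : Type*} [CommRing R] {ι : Type*} [Fintype ι]

lemma prod_offDiag_mul (t : ι → R) :
    ∏ p ∈ Finset.univ.offDiag, (t p.1 * t p.2) = (∏ i, t i) ^ (2 * (Fintype.card ι - 1)) := by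
  classical
  have hcard (i : ι) : (Finset.univ.erase i).card = Fintype.card ι - 1 :=
    Finset.card_erase_of_mem (Finset.mem_univ i)
  rw [Finset.prod_mul_distrib,
    Finset.prod_finset_product' _ Finset.univ (fun i => Finset.univ.erase i) (f := fun i _ => t i)
      (by simp [eq_comm]),
    Finset.prod_finset_product_right' _ Finset.univ (fun i => Finset.univ.erase i)
      (f := fun _ i => t i) (by simp)]
  simp only [Finset.prod_const, hcard, Finset.prod_pow]
  ring

/-- The product of the brackets of all ordered pairs of distinct linear forms: up to sign, the
discriminant of the product of the forms. -/
def discr (l : ι → Fin 2 → R) : R :=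
  ∏ p ∈ Finset.univ.offDiag, bracket (l p.1) (l p.2)

lemma map_discr {S : Type*} [CommRing S] (φ : R →+* S) (l : ι → Fin 2 → R) :
    φ (discr l) = discr fun i k => φ (l i k) := by
  simp only [discr, map_prod, map_bracket]

lemma discr_smul (t : ι → R) (l : ι → Fin 2 → R) :
    discr (fun i => t i • l i) = (∏ i, t i) ^ (2 * (Fintype.card ι - 1)) * discr l := by
  simp only [discr, bracket_smul_smul, Finset.prod_mul_distrib, ← prod_offDiag_mul t]

lemma discr_vecMul {M : Matrix (Fin 2) (Fin 2) R} (hM : M.det = 1) (l : ι → Fin 2 → R) :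
    discr (fun i => l i ᵥ* M) = discr l := by
  simp only [discr, bracket_vecMul, hM, one_mul]

lemma discr_ne_zero {K : Type*} [Field K] {l : ι → Fin 2 → K}
    (hl : Pairwise fun i j => bracket (l i) (l j) ≠ 0) : discr l ≠ 0 :=
  Finset.prod_ne_zero_iff.mpr fun _ hp => hl (Finset.mem_offDiag.mp hp).2.2

end Discriminant

section CrossRatio

variable {R : Type*} [CommRing R] {ι : Type*} [Fintype ι] [DecidableEq ι] {a b c : ι}

lemma prod_offDiag_eq_prod_erase_erase_mul {e e' : ι × ι} (he : e.1 ≠ e.2) (he' : e'.1 ≠ e'.2)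
    (hee' : e' ≠ e) (g : ι × ι → R) :
    ∏ p ∈ Finset.univ.offDiag, g p =
      (∏ p ∈ (Finset.univ.offDiag.erase e).erase e', g p) * (g e * g e') := by
  rw [← Finset.prod_erase_mul _ g (a := e) (by simp [he]),
    ← Finset.prod_erase_mul _ g (a := e') (by simp [he', hee'])]
  ring

/-- The cross-ratios `[j b][c a] / ([j a][c b])` for `j ≠ a`, multiplied by `discr l`: the
denominators cancel against two factors of the discriminant, whence a polynomial expression that
has the same degree in every `l i`. -/
def crossNum (a b c : ι) (l : ι → Fin 2 → R) (j : {j // j ≠ a}) : R :=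
  (∏ p ∈ (Finset.univ.offDiag.erase (j.1, a)).erase (c, b), bracket (l p.1) (l p.2)) *
    (bracket (l j) (l b) * bracket (l c) (l a))

/-- The cross-ratios of the zeros of the linear forms `l j`, for `j ≠ a`, with those of `l a`,
`l b` and `l c`. -/
def crossRatio {K : Type*} [Field K] (a b c : ι) (l : ι → Fin 2 → K) (j : {j // j ≠ a}) : K :=
  bracket (l j) (l b) * bracket (l c) (l a) / (bracket (l j) (l a) * bracket (l c) (l b))

lemma map_crossNum {S : Type*} [CommRing S] (φ : R →+* S) (l : ι → Fin 2 → R)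
    (j : {j // j ≠ a}) : φ (crossNum a b c l j) = crossNum a b c (fun i k => φ (l i k)) j := by
  simp only [crossNum, map_mul, map_prod, map_bracket]

lemma crossNum_smul (hab : a ≠ b) (hcb : c ≠ b) (t : ι → R) (l : ι → Fin 2 → R) :
    crossNum a b c (fun i => t i • l i) =
      (∏ i, t i) ^ (2 * (Fintype.card ι - 1)) • crossNum a b c l := by
  ext j
  have hne : (c, b) ≠ (j.1, a) := fun h => hab (Prod.ext_iff.mp h).2.symm
  rw [Pi.smul_apply, smul_eq_mul, ← prod_offDiag_mul t,
    prod_offDiag_eq_prod_erase_erase_mul j.2 hcb hne]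
  simp only [crossNum, bracket_smul_smul, Finset.prod_mul_distrib]
  ring

lemma crossNum_vecMul {M : Matrix (Fin 2) (Fin 2) R} (hM : M.det = 1) (l : ι → Fin 2 → R) :
    crossNum a b c (fun i => l i ᵥ* M) = crossNum a b c l := by
  ext j
  simp only [crossNum, bracket_vecMul, hM, one_mul]

lemma crossNum_eq_discr_smul_crossRatio {K : Type*} [Field K] {l : ι → Fin 2 → K} (hab : a ≠ b)
    (hcb : c ≠ b) (hl : Pairwise fun i j => bracket (l i) (l j) ≠ 0) :
    crossNum a b c l = discr l • crossRatio a b c l := by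
  ext j
  have hne : (c, b) ≠ (j.1, a) := fun h => hab (Prod.ext_iff.mp h).2.symm
  have hja : bracket (l j) (l a) ≠ 0 := hl j.2
  have hcb' : bracket (l c) (l b) ≠ 0 := hl hcb
  rw [Pi.smul_apply, smul_eq_mul, discr, prod_offDiag_eq_prod_erase_erase_mul j.2 hcb hne,
    crossNum, crossRatio]
  field_simp

/-- The product, over all orderings of the linear forms, of the `w`-weighted deviation of their
cross-ratios from the prescribed values `ρ`, cleared of denominators. -/
def separator (a b c : ι) (ρ w : {j // j ≠ a} → R) (l : ι → Fin 2 → R) : R :=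
  ∏ π : Equiv.Perm ι, w ⬝ᵥ (crossNum a b c (l ∘ π) - discr (l ∘ π) • ρ)

variable (ρ w : {j // j ≠ a} → R) (l : ι → Fin 2 → R)

lemma map_separator {S : Type*} [CommRing S] (φ : R →+* S) :
    φ (separator a b c ρ w l) = separator a b c (φ ∘ ρ) (φ ∘ w) fun i k => φ (l i k) := by
  simp only [separator, dotProduct, map_prod, map_sum, map_mul, Pi.sub_apply, Pi.smul_apply,
    smul_eq_mul, map_sub, map_crossNum, map_discr]
  rfl

lemma separator_comp_perm (σ : Equiv.Perm ι) :
    separator a b c ρ w (l ∘ σ) = separator a b c ρ w l :=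
  Equiv.prod_comp (Equiv.mulLeft σ) fun π : Equiv.Perm ι =>
    w ⬝ᵥ (crossNum a b c (l ∘ π) - discr (l ∘ π) • ρ)

lemma separator_smul (hab : a ≠ b) (hcb : c ≠ b) (t : ι → R) :
    separator a b c ρ w (fun i => t i • l i) =
      (∏ i, t i) ^ (2 * (Fintype.card ι - 1) * Fintype.card (Equiv.Perm ι)) *
        separator a b c ρ w l := by
  have hperm (π : Equiv.Perm ι) :
      w ⬝ᵥ (crossNum a b c ((fun i => t i • l i) ∘ π) - discr ((fun i => t i • l i) ∘ π) • ρ) =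
        (∏ i, t i) ^ (2 * (Fintype.card ι - 1)) *
          (w ⬝ᵥ (crossNum a b c (l ∘ π) - discr (l ∘ π) • ρ)) := by
    have hcomp : (fun i => t i • l i) ∘ π = fun i => (t ∘ π) i • (l ∘ π) i := rfl
    rw [hcomp, crossNum_smul hab hcb, discr_smul, mul_smul, ← smul_sub, dotProduct_smul,
      smul_eq_mul, Function.comp_def t, Equiv.prod_comp]
  rw [separator, Finset.prod_congr rfl fun π _ => hperm π, Finset.prod_mul_distrib,
    Finset.prod_const, Finset.card_univ, ← pow_mul, separator]

lemma separator_vecMul {M : Matrix (Fin 2) (Fin 2) R} (hM : M.det = 1) :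
    separator a b c ρ w (fun i => l i ᵥ* M) = separator a b c ρ w l := by
  refine Finset.prod_congr rfl fun π _ => ?_
  have hcomp : (fun i => l i ᵥ* M) ∘ π = fun i => (l ∘ π) i ᵥ* M := rfl
  rw [hcomp, crossNum_vecMul hM, discr_vecMul hM]

lemma separator_crossRatio_eq_zero {K : Type*} [Field K] (hab : a ≠ b) (hcb : c ≠ b)
    (w : {j // j ≠ a} → K) {l : ι → Fin 2 → K}
    (hl : Pairwise fun i j => bracket (l i) (l j) ≠ 0) :
    separator a b c (crossRatio a b c l) w l = 0 := by
  refine Finset.prod_eq_zero (Finset.mem_univ 1) ?_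
  rw [Equiv.Perm.coe_one, Function.comp_id, crossNum_eq_discr_smul_crossRatio hab hcb hl, sub_self,
    dotProduct_zero]

lemma exists_separator_ne_zero {K : Type*} [Field K] [Infinite K] (hab : a ≠ b) (hcb : c ≠ b)
    {ρ : {j // j ≠ a} → K} {m : ι → Fin 2 → K}
    (hm : Pairwise fun i j => bracket (m i) (m j) ≠ 0)
    (hρ : ∀ π : Equiv.Perm ι, crossRatio a b c (m ∘ π) ≠ ρ) :
    ∃ w, separator a b c ρ w m ≠ 0 := by
  obtain ⟨φ, hφ⟩ := Module.exists_dual_forall_apply_ne_zero (K := K)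
    (fun π : Equiv.Perm ι => crossNum a b c (m ∘ π) - discr (m ∘ π) • ρ) fun π => by
      have hmπ : Pairwise fun i j => bracket ((m ∘ π) i) ((m ∘ π) j) ≠ 0 :=
        fun i j hij => hm (π.injective.ne hij)
      rw [crossNum_eq_discr_smul_crossRatio hab hcb hmπ, ← smul_sub]
      exact smul_ne_zero (discr_ne_zero hmπ) (sub_ne_zero.mpr (hρ π))
  obtain ⟨w, rfl⟩ := (dotProductEquiv K {j // j ≠ a}).surjective φ
  exact ⟨w, Finset.prod_ne_zero_iff.mpr fun π _ => hφ π⟩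

end CrossRatio

section Separation

variable {K : Type*} [Field K] [IsAlgClosed K] {n : ℕ} {a b c : Fin n}

lemma exists_isInvariantPoly_eval_eq_separator (hab : a ≠ b) (hcb : c ≠ b)
    (ρ w : {j // j ≠ a} → K) :
    ∃ P : MvPolynomial (Fin (n + 1)) K, IsInvariantPoly n P ∧
      ∀ l : Fin n → Fin 2 → K, eval (prodCoeff l) P = separator a b c ρ w l := by
  have hn : n ≠ 0 := Fin.pos a |>.ne'
  have heval (l : Fin n → Fin 2 → K) : eval (Function.uncurry l)
      (separator a b c (C ∘ ρ) (C ∘ w) (genericVec K (Fin n))) = separator a b c ρ w l := by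
    rw [map_separator]
    simp [Function.comp_def, genericVec]
  obtain ⟨P, hP⟩ := mem_range_factorHom hn
    (F := separator a b c (C ∘ ρ) (C ∘ w) (genericVec K (Fin n)))
    (fun π l => by rw [heval, heval, separator_comp_perm])
    (fun t l => by rw [heval, heval, separator_smul ρ w l hab hcb])
  have hPeval (l : Fin n → Fin 2 → K) : eval (prodCoeff l) P = separator a b c ρ w l := by
    rw [← heval, ← hP, ← eval_factorHom]
    rfl
  refine ⟨P, isInvariantPoly_of_forall_prodCoeff hn fun M hM l => ?_, hPeval⟩
  rw [hPeval, hPeval, separator_vecMul ρ w l hM]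

lemma exists_perm_crossRatio_eq (hab : a ≠ b) (hcb : c ≠ b) {l m : Fin n → Fin 2 → K}
    (hl : Pairwise fun i j => bracket (l i) (l j) ≠ 0)
    (hm : Pairwise fun i j => bracket (m i) (m j) ≠ 0)
    (h : ∀ P : MvPolynomial (Fin (n + 1)) K, IsInvariantPoly n P →
      eval (prodCoeff m) P = eval (prodCoeff l) P) :
    ∃ π : Equiv.Perm (Fin n), crossRatio a b c (m ∘ π) = crossRatio a b c l := by
  have : Infinite K := IsAlgClosed.instInfinite
  by_contra! hne
  obtain ⟨w, hw⟩ := exists_separator_ne_zero hab hcb hm hne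
  obtain ⟨P, hinv, hP⟩ := exists_isInvariantPoly_eval_eq_separator hab hcb (crossRatio a b c l) w
  rw [← hP, h P hinv, hP, separator_crossRatio_eq_zero hab hcb w hl] at hw
  exact hw rfl

end Separation

section Projectivity

variable {K : Type*} [Field K]

/-- Cramer's rule `bracket v w • u = bracket u w • v - bracket u v • w` makes the formula a
division-free version of the linear map `v ↦ α • p`, `w ↦ β • q`. -/
lemma exists_matrix_vecMul_eq (v w p q : Fin 2 → K) (α β : K) :
    ∃ M : Matrix (Fin 2) (Fin 2) K, M.det = α * β * bracket v w * bracket p q ∧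
      ∀ u, u ᵥ* M = (α * bracket u w) • p - (β * bracket u v) • q := by
  refine ⟨.of ![(α * w 1) • p - (β * v 1) • q, (β * v 0) • q - (α * w 0) • p], ?_, fun u => ?_⟩
  · simp only [Matrix.det_fin_two, bracket, Matrix.of_apply, Matrix.cons_val_zero,
      Matrix.cons_val_one, Pi.sub_apply, Pi.smul_apply, smul_eq_mul]
    ring
  · ext k
    simp only [Matrix.vecMul_eq_sum, Fin.sum_univ_two, bracket, Matrix.of_apply,
      Matrix.cons_val_zero, Matrix.cons_val_one, Pi.add_apply, Pi.sub_apply, Pi.smul_apply,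
      smul_eq_mul]
    ring

lemma exists_vecMul_eq_smul_of_bracket_eq_zero {ι : Type*} {M : Matrix (Fin 2) (Fin 2) K}
    (hM : M.det ≠ 0) {l m : ι → Fin 2 → K} (hl : ∀ j, l j ≠ 0) (hm : ∀ j, m j ≠ 0)
    (h : ∀ j, bracket (l j ᵥ* M) (m j) = 0) :
    ∃ t : ι → K, (∀ j, t j ≠ 0) ∧ ∀ j, l j ᵥ* M = t j • m j := by
  have hlM (j : ι) : l j ᵥ* M ≠ 0 := fun h0 => hl j (Matrix.eq_zero_of_vecMul_eq_zero hM h0)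
  choose t ht htm using fun j => exists_eq_smul_of_bracket_eq_zero (hlM j) (hm j) (h j)
  exact ⟨t, ht, htm⟩

lemma exists_vecMul_eq_smul_of_crossRatio_eq {ι : Type*} {a b c : ι}
    (hab : a ≠ b) (hcb : c ≠ b) (hca : c ≠ a) {l m : ι → Fin 2 → K}
    (hl : Pairwise fun i j => bracket (l i) (l j) ≠ 0)
    (hm : Pairwise fun i j => bracket (m i) (m j) ≠ 0)
    (h : crossRatio a b c l = crossRatio a b c m) :
    ∃ M : Matrix (Fin 2) (Fin 2) K, IsUnit M.det ∧ ∃ t : ι → K, (∀ j, t j ≠ 0) ∧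
      ∀ j, l j ᵥ* M = t j • m j := by
  obtain ⟨M, hdet, hM⟩ := exists_matrix_vecMul_eq (l a) (l b) (m a) (m b)
    (bracket (m c) (m b) * bracket (l c) (l a)) (bracket (m c) (m a) * bracket (l c) (l b))
  have hdet0 : M.det ≠ 0 := by
    rw [hdet]
    exact mul_ne_zero (mul_ne_zero (mul_ne_zero (mul_ne_zero (hm hcb) (hl hca))
      (mul_ne_zero (hm hca) (hl hcb))) (hl hab)) (hm hab)
  have hne {k : ι → Fin 2 → K} (hk : Pairwise fun i j => bracket (k i) (k j) ≠ 0) (j : ι) :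
      k j ≠ 0 := by
    obtain rfl | hj := eq_or_ne j a
    exacts [ne_zero_of_bracket_ne_zero (hk hab), ne_zero_of_bracket_ne_zero (hk hj)]
  refine ⟨M, hdet0.isUnit, exists_vecMul_eq_smul_of_bracket_eq_zero hdet0 (hne hl) (hne hm)
    fun j => ?_⟩
  have hcross : bracket (l j) (l b) * bracket (l c) (l a) *
      (bracket (m j) (m a) * bracket (m c) (m b)) =
      bracket (m j) (m b) * bracket (m c) (m a) *
        (bracket (l j) (l a) * bracket (l c) (l b)) := by
    obtain rfl | hj := eq_or_ne j a
    · simp only [bracket_self, zero_mul, mul_zero]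
    · exact (div_eq_div_iff (mul_ne_zero (hl hj) (hl hcb))
        (mul_ne_zero (hm hj) (hm hcb))).mp (congrFun h ⟨j, hj⟩)
  rw [hM]
  simp only [bracket, Pi.sub_apply, Pi.smul_apply, smul_eq_mul] at hcross ⊢
  linear_combination -hcross

end Projectivity

section Isomorphism

lemma eval_eq_of_mem_adjoin {R σ ι : Type*} [CommSemiring R] {x y : σ → R}
    {I : ι → MvPolynomial σ R} (h : ∀ i, eval x (I i) = eval y (I i)) {P : MvPolynomial σ R}
    (hP : P ∈ Algebra.adjoin R (Set.range I)) : eval x P = eval y P := by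
  have hEqOn : Set.EqOn (aeval (R := R) x) (aeval y) (Set.range I) := by
    rintro _ ⟨i, rfl⟩
    exact h i
  exact AlgHom.adjoin_le_equalizer _ _ hEqOn hP

variable {K : Type*} [Field K] {n : ℕ} {f f' : MvPolynomial (Fin 2) K}

lemma eval_coeffVec_pullback {P : MvPolynomial (Fin (n + 1)) K} (hP : IsInvariantPoly n P)
    {M : Matrix (Fin 2) (Fin 2) K} (hM : M.det = 1) (hf : f.IsHomogeneous n) :
    eval (coeffVec n (pullback M f)) P = eval (coeffVec n f) P := by
  have hdet : M⁻¹.det = 1 := by rw [Matrix.det_nonsing_inv, hM, Ring.inverse_one]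
  have hinv := hP M⁻¹ hdet f hf
  rwa [matAct_eq_pullback_inv, Matrix.nonsing_inv_nonsing_inv M (by simp [hM])] at hinv

variable [IsAlgClosed K]

lemma exists_eval_eq_pow_mul_eval_of_pullback_eq (hf' : f'.IsHomogeneous n)
    {M : Matrix (Fin 2) (Fin 2) K} (hM : IsUnit M.det) {e : K} (he : e ≠ 0)
    (h : C e * f = pullback M f') :
    ∃ lam : K, lam ≠ 0 ∧ ∀ (d : ℕ) (P : MvPolynomial (Fin (n + 1)) K), P.IsHomogeneous d →
      IsInvariantPoly n P → eval (coeffVec n f') P = lam ^ d * eval (coeffVec n f) P := by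
  obtain ⟨μ, hμ⟩ := IsAlgClosed.exists_pow_nat_eq M.det two_pos
  have hμ0 : μ ≠ 0 := by
    rintro rfl
    exact hM.ne_zero (by simpa using hμ.symm)
  have hdet : (μ⁻¹ • M).det = 1 := by
    rw [Matrix.det_smul, Fintype.card_fin, ← hμ, ← mul_pow, inv_mul_cancel₀ hμ0, one_pow]
  have hpull : pullback (μ⁻¹ • M) f' = C (e * μ⁻¹ ^ n) * f := by
    rw [pullback_smul hf', ← h, ← mul_assoc, ← C_mul, mul_comm e]
  refine ⟨e * μ⁻¹ ^ n, mul_ne_zero he (pow_ne_zero _ (inv_ne_zero hμ0)), fun d P hd hP => ?_⟩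
  rw [← eval_coeffVec_pullback hP hdet hf', hpull, coeffVec_C_mul, eval_smul_of_isHomogeneous hd]

lemma exists_pullback_eq_of_forall_eval_eq (hn : 3 ≤ n) (hf : f.IsHomogeneous n)
    (hfs : Squarefree f) (hf' : f'.IsHomogeneous n) (hfs' : Squarefree f')
    (h : ∀ P : MvPolynomial (Fin (n + 1)) K, IsInvariantPoly n P →
      eval (coeffVec n f') P = eval (coeffVec n f) P) :
    ∃ (M : Matrix (Fin 2) (Fin 2) K) (t : K), IsUnit M.det ∧ t ≠ 0 ∧
      C t * f = pullback M f' := by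
  obtain ⟨l, rfl⟩ := exists_eq_prod_linearForm (by lia) hf
  obtain ⟨m, rfl⟩ := exists_eq_prod_linearForm (by lia) hf'
  have hl := bracket_ne_zero_of_squarefree hfs
  have hm := bracket_ne_zero_of_squarefree hfs'
  simp only [coeffVec_prod_linearForm] at h
  let a : Fin n := ⟨0, by lia⟩
  let b : Fin n := ⟨1, by lia⟩
  let c : Fin n := ⟨2, by lia⟩
  have hab : a ≠ b := by simp [a, b]
  have hcb : c ≠ b := by simp [c, b]
  have hca : c ≠ a := by simp [c, a]
  obtain ⟨π, hπ⟩ := exists_perm_crossRatio_eq hab hcb hm hl fun P hP => (h P hP).symm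
  obtain ⟨M, hM, t, ht, hMt⟩ := exists_vecMul_eq_smul_of_crossRatio_eq hab hcb hca hm
    (fun i j hij => hl (π.injective.ne hij)) hπ.symm
  refine ⟨M, ∏ j, t j, hM, Finset.prod_ne_zero_iff.mpr fun j _ => ht j, ?_⟩
  simp only [pullback_prod_linearForm, hMt, prod_linearForm_smul,
    Equiv.prod_comp π fun j => linearForm (l j)]

end Isomorphism

end BinaryForm

open BinaryForm in
theorem statement10_general {K : Type*} [Field K] [IsAlgClosed K] {n : ℕ} (hn : 3 ≤ n)
    {ι : Type*} (I : ι → MvPolynomial (Fin (n + 1)) K) (d : ι → ℕ)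
    (hhom : ∀ i, (I i).IsHomogeneous (d i)) (hinv : ∀ i, IsInvariantPoly n (I i))
    (hgen : ∀ P : MvPolynomial (Fin (n + 1)) K, IsInvariantPoly n P →
      P ∈ Algebra.adjoin K (Set.range I))
    (f f' : MvPolynomial (Fin 2) K) (hf : f.IsHomogeneous n) (hfs : Squarefree f)
    (hf' : f'.IsHomogeneous n) (hfs' : Squarefree f') :
    (∃ (M : Matrix (Fin 2) (Fin 2) K) (e : K), IsUnit M.det ∧ e ≠ 0 ∧
        C (e ^ 2) * f = bind₁ (fun j : Fin 2 => C (M j 0) * X 0 + C (M j 1) * X 1) f') ↔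
      ∃ lam : K, lam ≠ 0 ∧ ∀ i,
        eval (coeffVec n f') (I i) = lam ^ d i * eval (coeffVec n f) (I i) := by
  constructor
  · rintro ⟨M, e, hM, he, h⟩
    obtain ⟨lam, hlam, heval⟩ :=
      exists_eval_eq_pow_mul_eval_of_pullback_eq hf' hM (pow_ne_zero 2 he) h
    exact ⟨lam, hlam, fun i => heval (d i) (I i) (hhom i) (hinv i)⟩
  · rintro ⟨lam, hlam, h⟩
    have hunit : IsUnit (C lam : MvPolynomial (Fin 2) K) := hlam.isUnit.map C
    have hscaled (i : ι) : eval (coeffVec n f') (I i) = eval (coeffVec n (C lam * f)) (I i) := by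
      rw [coeffVec_C_mul, eval_smul_of_isHomogeneous (hhom i), h i]
    obtain ⟨M, t, hM, ht, hMt⟩ := exists_pullback_eq_of_forall_eval_eq hn (hf.C_mul lam)
      ((associated_unit_mul_left f _ hunit).squarefree_iff.mpr hfs) hf' hfs'
      fun P hP => eval_eq_of_mem_adjoin hscaled (hgen P hP)
    obtain ⟨e, he⟩ := IsAlgClosed.exists_pow_nat_eq (t * lam) two_pos
    refine ⟨M, e, hM, ?_, ?_⟩
    · rintro rfl
      exact mul_ne_zero ht hlam (by simpa using he.symm)
    · rw [he, C_mul, mul_assoc, hMt]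
      rfl

/-- Let `K` be algebraically closed of characteristic `≠ 2`, `g ≥ 2`, and let `I₁,…,I_m` be
homogeneous generators of degrees `d₁,…,d_m` of the algebra of `SL₂(K)`-invariants of binary
`(2g+2)`-forms.  Two hyperelliptic polynomials `f, f'` of degree `2g+2` define `K`-isomorphic
genus-`g` hyperelliptic curves `y² = f(x)` and `y² = f'(x)` — i.e. `e²·f(X,Z) = f'(M·(X,Z))`
for some `M ∈ GL₂(K)` and `e ∈ K*` — iff there is a `λ ∈ K*` with
`I_i(f') = λ^{d_i}·I_i(f)` for all `i`. -/
theorem statement10 {K : Type*} [Field K] [IsAlgClosed K] (hchar : (2 : K) ≠ 0)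
    (g : ℕ) (hg : 2 ≤ g) (m : ℕ)
    (I : Fin m → MvPolynomial (Fin (2 * g + 2 + 1)) K) (d : Fin m → ℕ)
    (hhom : ∀ i, (I i).IsHomogeneous (d i))
    (hinv : ∀ i, IsInvariantPoly (2 * g + 2) (I i))
    (hgen : ∀ P : MvPolynomial (Fin (2 * g + 2 + 1)) K, IsInvariantPoly (2 * g + 2) P →
      P ∈ Algebra.adjoin K (Set.range I))
    (f f' : MvPolynomial (Fin 2) K)
    (hf : f.IsHomogeneous (2 * g + 2)) (hfs : Squarefree f)
    (hf' : f'.IsHomogeneous (2 * g + 2)) (hfs' : Squarefree f') :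
    (∃ (M : Matrix (Fin 2) (Fin 2) K) (e : K), IsUnit M.det ∧ e ≠ 0 ∧
        C (e ^ 2) * f = bind₁ (fun j : Fin 2 => C (M j 0) * X 0 + C (M j 1) * X 1) f') ↔
      (∃ lam : K, lam ≠ 0 ∧ ∀ i,
        eval (coeffVec (2 * g + 2) f') (I i) =
          lam ^ (d i) * eval (coeffVec (2 * g + 2) f) (I i)) := by
  exact statement10_general (by lia) I d hhom hinv hgen f f' hf hfs hf' hfs'
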